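/- On V = F_{q²} ⊗ F_q ⊗ F_{q²} ⊗ F_q, the operators ξ₂ = (1−q⁴)⁻¹ (A⁺K⁻¹ ⊗ 1 ⊗ 1 ⊗ 1) and ξ₁ = (1−q²)⁻¹ (A⁻ ⊗ a⁺k⁻¹ ⊗ 1 ⊗ 1 + K ⊗ a⁻k⁻¹ ⊗ A⁺K⁻¹ ⊗ 1 + K ⊗ 1 ⊗ K⁻¹ ⊗ a⁺k⁻¹) satisfy the q-Serre relations of type C₂: ξ₁³ξ₂ − [3]₁ ξ₁²ξ₂ξ₁ + [3]₁ ξ₁ξ₂ξ₁² − ξ₂ξ₁³ = 0 and ξ₂²ξ₁ − (q²+q⁻²) ξ₂ξ₁ξ₂ + ξ₁ξ₂² = 0, where [3]₁ = q² + 1 + q⁻². -/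

import Mathlib

noncomputable section

/-- The base field `K = ℚ(q)`, rational functions over `ℚ`. -/
abbrev K : Type := RatFunc ℚ

/-- The indeterminate `q`. -/
def q : K := RatFunc.X

/-- `⟨m⟩ = q^m − q^{−m}`. -/
def qbra (m : ℕ) : K := q ^ m - q⁻¹ ^ m

/-- `[m]₁ = ⟨m⟩/⟨1⟩`. -/
def qn1 (m : ℕ) : K := qbra m / qbra 1

/-- `[m]₂ = ⟨2m⟩/⟨2⟩`. -/
def qn2 (m : ℕ) : K := qbra (2 * m) / qbra 2

/-- The Fock space with basis `|m⟩, m ∈ ℕ` (underlying both `F_q` and `F_{q²}`). -/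
abbrev F : Type := ℕ →₀ K

/-- The basis vector `|m⟩`. -/
def ket (m : ℕ) : F := Finsupp.single m 1

/-- On `F_q`, the operator `k : |m⟩ ↦ q^m |m⟩`. -/
def opK : Module.End K F := Finsupp.lift F K ℕ fun m => (q ^ m) • ket m

/-- The inverse `k⁻¹ : |m⟩ ↦ q^{−m} |m⟩`. -/
def opKInv : Module.End K F := Finsupp.lift F K ℕ fun m => (q ^ m)⁻¹ • ket m

/-- The raising operator `a⁺ = A⁺ : |m⟩ ↦ |m+1⟩`. -/
def opAp : Module.End K F := Finsupp.lift F K ℕ fun m => ket (m + 1)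

/-- On `F_q`, the lowering operator `a⁻ : |m⟩ ↦ (1 − q^{2m}) |m-1⟩` (killing `|0⟩`). -/
def opAm : Module.End K F := Finsupp.lift F K ℕ fun m => (1 - q ^ (2 * m)) • ket (m - 1)

/-- On `F_{q²}`, the operator `K : |m⟩ ↦ q^{2m} |m⟩`. -/
def opK2 : Module.End K F := Finsupp.lift F K ℕ fun m => (q ^ (2 * m)) • ket m

/-- The inverse `K⁻¹ : |m⟩ ↦ q^{−2m} |m⟩`. -/
def opK2Inv : Module.End K F := Finsupp.lift F K ℕ fun m => (q ^ (2 * m))⁻¹ • ket m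

/-- On `F_{q²}`, the lowering operator `A⁻ : |m⟩ ↦ (1 − q^{4m}) |m-1⟩` (killing `|0⟩`). -/
def opAm2 : Module.End K F := Finsupp.lift F K ℕ fun m => (1 - q ^ (4 * m)) • ket (m - 1)

open TensorProduct

/-- The tensor product `V = F_{q²} ⊗ F_q ⊗ F_{q²} ⊗ F_q`. -/
abbrev V4 : Type := F ⊗[K] (F ⊗[K] (F ⊗[K] F))

instance : AddCommGroup (F ⊗[K] (F ⊗[K] F)) := by
  exact @TensorProduct.addCommGroup K _ F (F ⊗[K] F) _ _ _ _

instance : AddCommGroup V4 := by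
  exact @TensorProduct.addCommGroup K _ F (F ⊗[K] (F ⊗[K] F)) _ _ _ _

/-- `f ⊗ g ⊗ h ⊗ i` as an operator on `V`. -/
def tens4 (f g h i : Module.End K F) : Module.End K V4 :=
  TensorProduct.map f (TensorProduct.map g (TensorProduct.map h i))

/-- The operator `ξ₂ = (1−q⁴)⁻¹ (A⁺K⁻¹ ⊗ 1 ⊗ 1 ⊗ 1)`. -/
def xi2 : Module.End K V4 := (1 - q ^ 4)⁻¹ • tens4 (opAp * opK2Inv) 1 1 1

/-- The operator
`ξ₁ = (1−q²)⁻¹ (A⁻ ⊗ a⁺k⁻¹ ⊗ 1 ⊗ 1 + K ⊗ a⁻k⁻¹ ⊗ A⁺K⁻¹ ⊗ 1 + K ⊗ 1 ⊗ K⁻¹ ⊗ a⁺k⁻¹)`. -/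
def xi1 : Module.End K V4 :=
  (1 - q ^ 2)⁻¹ •
    (tens4 opAm2 (opAp * opKInv) 1 1
      + tens4 opK2 (opAm * opKInv) (opAp * opK2Inv) 1
      + tens4 opK2 1 opK2Inv (opAp * opKInv))

lemma serre_three {k R : Type*} [Field k] [Ring R] [Algebra k R] (t : k) (ht : t ≠ 0)
    (T B E G : R) (α β : k) (h1 : T * B = t • (B * T) + E) (h2 : T * E = E * T + G)
    (h3 : T * G = t⁻¹ • (G * T)) :
    (α • T) ^ 3 * (β • B) - (t + 1 + t⁻¹) • ((α • T) ^ 2 * (β • B) * (α • T))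
      + (t + 1 + t⁻¹) • ((α • T) * (β • B) * (α • T) ^ 2) - (β • B) * (α • T) ^ 3 = 0 := by
  have hE : E = T * B - t • (B * T) := by rw [h1]; abel
  have hG : G = T * E - E * T := by rw [h2]; abel
  subst hE
  subst hG
  simp only [mul_sub, sub_mul, mul_assoc, mul_smul_comm, smul_mul_assoc, smul_sub, smul_smul] at h3
  have h4 := sub_eq_zero.mpr h3
  simp only [pow_succ, pow_zero, one_mul, mul_assoc, mul_smul_comm, smul_mul_assoc, smul_smul]
  have h5 := congrArg (fun x => (α ^ 3 * β) • x) h4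
  simp only [smul_zero] at h5
  rw [← h5]
  match_scalars <;> field_simp <;> ring

lemma serre_two {k R : Type*} [Field k] [Ring R] [Algebra k R] (t : k) (ht : t ≠ 0)
    (T B E : R) (α β : k) (h1 : T * B = t • (B * T) + E) (h2 : E * B = t⁻¹ • (B * E)) :
    (β • B) ^ 2 * (α • T) - (t + t⁻¹) • ((β • B) * (α • T) * (β • B))
      + (α • T) * (β • B) ^ 2 = 0 := by
  have hE : E = T * B - t • (B * T) := by rw [h1]; abel
  subst hE
  simp only [mul_sub, sub_mul, mul_assoc, mul_smul_comm, smul_mul_assoc, smul_sub, smul_smul] at h2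
  have h4 := sub_eq_zero.mpr h2
  simp only [pow_succ, pow_zero, one_mul, mul_assoc, mul_smul_comm, smul_mul_assoc, smul_smul]
  have h5 := congrArg (fun x => (α * β ^ 2) • x) h4
  simp only [smul_zero] at h5
  rw [← h5]
  match_scalars <;> field_simp <;> ring

/-- Shortcut instances, so that `module` finds the standard structures on `K`. -/
instance algNatK : Algebra ℕ K := Semiring.toNatAlgebra
instance algIntK : Algebra ℤ K := Ring.toIntAlgebra K

lemma lift_ket (f : ℕ → F) (m : ℕ) : Finsupp.lift F K ℕ f (ket m) = f m := by
  rw [Finsupp.lift_apply, ket, Finsupp.sum_single_index]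
  · exact one_smul K (f m)
  · exact zero_smul K (f m)

lemma q_ne : q ≠ 0 := RatFunc.X_ne_zero

lemma opKInv_ket (m : ℕ) : opKInv (ket m) = (q ^ m)⁻¹ • ket m := by
  exact lift_ket _ m
lemma opAp_ket (m : ℕ) : opAp (ket m) = ket (m + 1) := by
  exact lift_ket _ m
lemma opAm_ket (m : ℕ) : opAm (ket m) = (1 - q ^ (2 * m)) • ket (m - 1) := by
  exact lift_ket _ m
lemma opK2_ket (m : ℕ) : opK2 (ket m) = (q ^ (2 * m)) • ket m := by
  exact lift_ket _ m
lemma opK2Inv_ket (m : ℕ) : opK2Inv (ket m) = (q ^ (2 * m))⁻¹ • ket m := by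
  exact lift_ket _ m
lemma opAm2_ket (m : ℕ) : opAm2 (ket m) = (1 - q ^ (4 * m)) • ket (m - 1) := by
  exact lift_ket _ m

lemma end_ext {f g : Module.End K F} (h : ∀ m, f (ket m) = g (ket m)) : f = g := by
  apply Finsupp.lhom_ext'
  intro m
  apply LinearMap.ext_ring
  exact h m

/-- `A⁺K⁻¹`. -/
def oB : Module.End K F := opAp * opK2Inv
/-- `a⁺k⁻¹`. -/
def ob : Module.End K F := opAp * opKInv
/-- `a⁻k⁻¹`. -/
def od : Module.End K F := opAm * opKInv

lemma rel_AB : opAm2 * oB = q ^ 2 • (oB * opAm2) + (1 - q ^ 4) • opK2Inv := by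
  have hq := q_ne
  apply end_ext
  rintro (_ | m) <;>
  simp only [oB, Module.End.mul_apply, LinearMap.add_apply, LinearMap.smul_apply, map_smul,
    opAp_ket, opAm2_ket, opK2Inv_ket, Nat.add_sub_cancel, Nat.zero_sub] <;>
  match_scalars <;> field_simp <;> ring

lemma rel_KB : opK2 * oB = q ^ 2 • (oB * opK2) := by
  have hq := q_ne
  apply end_ext
  intro m
  simp only [oB, Module.End.mul_apply, LinearMap.add_apply, LinearMap.smul_apply, map_smul,
    opAp_ket, opK2_ket, opK2Inv_ket]
  match_scalars; field_simp; ring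

lemma rel_KiB : opK2Inv * oB = (q ^ 2)⁻¹ • (oB * opK2Inv) := by
  have hq := q_ne
  apply end_ext
  intro m
  simp only [oB, Module.End.mul_apply, LinearMap.add_apply, LinearMap.smul_apply, map_smul,
    opAp_ket, opK2Inv_ket]
  match_scalars; field_simp; ring

lemma rel_KKi : opK2 * opK2Inv = 1 := by
  have hq := q_ne
  apply end_ext
  intro m
  simp only [Module.End.mul_apply, Module.End.one_apply, map_smul, opK2_ket, opK2Inv_ket]
  match_scalars; field_simp

lemma rel_KiK : opK2Inv * opK2 = 1 := by
  have hq := q_ne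
  apply end_ext
  intro m
  simp only [Module.End.mul_apply, Module.End.one_apply, map_smul, opK2_ket, opK2Inv_ket]
  match_scalars; field_simp

lemma rel_KiA : opK2Inv * opAm2 = q ^ 2 • (opAm2 * opK2Inv) := by
  have hq := q_ne
  apply end_ext
  rintro (_ | m) <;>
  simp only [Module.End.mul_apply, LinearMap.smul_apply, map_smul,
    opAm2_ket, opK2Inv_ket, Nat.add_sub_cancel, Nat.zero_sub] <;>
  match_scalars <;> field_simp <;> ring

lemma rel_KA : opK2 * opAm2 = (q ^ 2)⁻¹ • (opAm2 * opK2) := by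
  have hq := q_ne
  apply end_ext
  rintro (_ | m) <;>
  simp only [Module.End.mul_apply, LinearMap.smul_apply, map_smul,
    opAm2_ket, opK2_ket, Nat.add_sub_cancel, Nat.zero_sub] <;>
  match_scalars <;> field_simp <;> ring

lemma rel_db : od * ob = (q ^ 2)⁻¹ • (ob * od) + (q⁻¹ - q) • (1 : Module.End K F) := by
  have hq := q_ne
  apply end_ext
  rintro (_ | m) <;>
  simp only [od, ob, Module.End.mul_apply, Module.End.one_apply, LinearMap.add_apply,
    LinearMap.smul_apply, map_smul,
    opAp_ket, opAm_ket, opKInv_ket, Nat.add_sub_cancel, Nat.zero_sub] <;>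
  match_scalars <;> field_simp <;> ring

lemma tens4_mul (f g h i f' g' h' i' : Module.End K F) :
    tens4 f g h i * tens4 f' g' h' i' = tens4 (f * f') (g * g') (h * h') (i * i') := by
  simp only [tens4, TensorProduct.map_mul]

lemma tens4_smul1 (c : K) (f g h i : Module.End K F) :
    tens4 (c • f) g h i = c • tens4 f g h i := by
  simp only [tens4, TensorProduct.map_smul_left]
lemma tens4_smul2 (c : K) (f g h i : Module.End K F) :
    tens4 f (c • g) h i = c • tens4 f g h i := by
  simp only [tens4, TensorProduct.map_smul_left, TensorProduct.map_smul_right]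
lemma tens4_smul3 (c : K) (f g h i : Module.End K F) :
    tens4 f g (c • h) i = c • tens4 f g h i := by
  simp only [tens4, TensorProduct.map_smul_left, TensorProduct.map_smul_right]
lemma tens4_add1 (f f' g h i : Module.End K F) :
    tens4 (f + f') g h i = tens4 f g h i + tens4 f' g h i := by
  simp only [tens4, TensorProduct.map_add_left]
lemma tens4_add2 (f g g' h i : Module.End K F) :
    tens4 f (g + g') h i = tens4 f g h i + tens4 f g' h i := by
  simp only [tens4, TensorProduct.map_add_left, TensorProduct.map_add_right]

/-- The unnormalised `ξ₁`. -/
def oT : Module.End K V4 :=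
  tens4 opAm2 ob 1 1 + tens4 opK2 od oB 1 + tens4 opK2 1 opK2Inv ob

/-- The unnormalised `ξ₂`. -/
def oS : Module.End K V4 := tens4 oB 1 1 1

/-- First q-commutator. -/
def oE : Module.End K V4 := (1 - q ^ 4) • tens4 opK2Inv ob 1 1

/-- Second q-commutator. -/
def oG : Module.End K V4 :=
  (1 - q ^ 4) • ((1 - q ^ 2) • tens4 (opAm2 * opK2Inv) (ob * ob) 1 1
    + ((q ^ 2)⁻¹ - 1) • tens4 1 (ob * od) oB 1 + (q⁻¹ - q) • tens4 1 1 oB 1)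

lemma left_rel {x y z : Module.End K F} (h : x * y = z) (w : Module.End K F) :
    x * (y * w) = z * w := by rw [← mul_assoc, h]

lemma step1 : oT * oS = q ^ 2 • (oS * oT) + oE := by
  simp only [oT, oS, oE, add_mul, mul_add, tens4_mul, one_mul, mul_one, rel_AB, rel_KB,
    tens4_smul1, tens4_add1]
  module

lemma step1' : oE * oS = (q ^ 2)⁻¹ • (oS * oE) := by
  simp only [oS, oE, mul_smul_comm, smul_mul_assoc, tens4_mul, one_mul, mul_one, rel_KiB,
    tens4_smul1]
  module

lemma step2 : oT * oE = oE * oT + oG := by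
  simp only [oT, oG, oE, add_mul, mul_add, tens4_mul, one_mul, mul_one, rel_KiA, rel_KiK, rel_KKi,
    rel_db, mul_smul_comm, smul_mul_assoc,
    tens4_smul1, tens4_smul2, tens4_add1, tens4_add2]
  module

lemma step3 : oT * oG = (q ^ 2)⁻¹ • (oG * oT) := by
  have hq := q_ne
  simp only [oT, oG, add_mul, mul_add, tens4_mul, one_mul, mul_one, mul_assoc,
    rel_KiA, rel_KiK, rel_KKi, rel_KA, rel_KiB, left_rel rel_KA, left_rel rel_db,
    rel_db, mul_smul_comm, smul_mul_assoc, smul_add,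
    tens4_smul1, tens4_smul2, tens4_smul3, tens4_add1, tens4_add2]
  match_scalars <;> field_simp <;> ring

/-- `ξ₁, ξ₂` satisfy the `q`-Serre relations of type `C₂`,
with `[3]₁ = q² + 1 + q⁻²`. -/
theorem statement15 :
    xi1 ^ 3 * xi2 - (q ^ 2 + 1 + q⁻¹ ^ 2) • (xi1 ^ 2 * xi2 * xi1)
        + (q ^ 2 + 1 + q⁻¹ ^ 2) • (xi1 * xi2 * xi1 ^ 2) - xi2 * xi1 ^ 3 = 0 ∧
    xi2 ^ 2 * xi1 - (q ^ 2 + q⁻¹ ^ 2) • (xi2 * xi1 * xi2) + xi1 * xi2 ^ 2 = 0 := by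
  have ht : q ^ 2 ≠ 0 := pow_ne_zero 2 q_ne
  rw [inv_pow]
  exact ⟨serre_three (q ^ 2) ht oT oS oE oG (1 - q ^ 2)⁻¹ (1 - q ^ 4)⁻¹ step1 step2 step3,
    serre_two (q ^ 2) ht oT oS oE (1 - q ^ 2)⁻¹ (1 - q ^ 4)⁻¹ step1 step1'⟩
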